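/- Let (X, f_{1,∞}) be an NDS. If f_{1,∞} is thickly transitive, then f_{1,∞} is totally transitive. -/

import Mathlib

open Set Filter

section NDSDefs

variable {X : Type*}

/-- `nComp f i n` is the composition `f (i+n-1) ∘ ⋯ ∘ f (i+1) ∘ f i`.
Here `f` is the 0-indexed sequence of maps of the NDS (so `f 0` is the paper's `f₁`),
and `nComp f 0 n` is the paper's `f₁ⁿ`. -/
def nComp (f : ℕ → X → X) (i : ℕ) : ℕ → X → X
  | 0 => id
  | n + 1 => f (i + n) ∘ nComp f i n

/-- The `k`-th iterate NDS `f^{[k]}`: its `n`-th map (0-indexed) is `f_{kn+1}^{k}`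
in the paper's notation, i.e. the composition of `k` maps of `f` starting at index `k*n`. -/
def iterNDS (f : ℕ → X → X) (k : ℕ) : ℕ → X → X :=
  fun n => nComp f (k * n) k

/-- The product NDS `f^{[a]} = f^{[a 0]} × ⋯ × f^{[a (r-1)]}` on `Fin r → X`
for a vector `a : Fin r → ℕ`. -/
def vecIter (f : ℕ → X → X) {r : ℕ} (a : Fin r → ℕ) : ℕ → (Fin r → X) → Fin r → X :=
  fun n x i => iterNDS f (a i) n (x i)

section Topo

variable [TopologicalSpace X]

/-- Topological transitivity of an NDS. -/
def NDSTransitive (f : ℕ → X → X) : Prop :=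
  ∀ U V : Set X, IsOpen U → U.Nonempty → IsOpen V → V.Nonempty →
    ∃ n : ℕ, 1 ≤ n ∧ (nComp f 0 n '' U ∩ V).Nonempty

/-- Multi-transitivity of an NDS. -/
def MultiTransitive (f : ℕ → X → X) : Prop :=
  ∀ m : ℕ, 1 ≤ m → ∀ U V : Fin m → Set X,
    (∀ i, IsOpen (U i)) → (∀ i, (U i).Nonempty) →
    (∀ i, IsOpen (V i)) → (∀ i, (V i).Nonempty) →
    ∃ l : ℕ, 1 ≤ l ∧ ∀ i : Fin m, (nComp f 0 ((i.1 + 1) * l) '' U i ∩ V i).Nonempty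

/-- Multi-transitivity of an NDS with respect to a vector `a`. -/
def MultiTransWrt (f : ℕ → X → X) {p : ℕ} (a : Fin p → ℕ) : Prop :=
  ∀ U V : Fin p → Set X,
    (∀ i, IsOpen (U i)) → (∀ i, (U i).Nonempty) →
    (∀ i, IsOpen (V i)) → (∀ i, (V i).Nonempty) →
    ∃ l : ℕ, 1 ≤ l ∧ ∀ i : Fin p, (nComp f 0 (a i * l) '' U i ∩ V i).Nonempty

/-- Strong multi-transitivity of an NDS: multi-transitivity with respect to every
vector of positive integers. -/
def StronglyMultiTransitive (f : ℕ → X → X) : Prop :=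
  ∀ p : ℕ, 1 ≤ p → ∀ a : Fin p → ℕ, (∀ i, 1 ≤ a i) → MultiTransWrt f a

/-- Weak mixing of order `n` of an NDS. -/
def WeaklyMixingOfOrder (f : ℕ → X → X) (n : ℕ) : Prop :=
  ∀ U V : Fin n → Set X,
    (∀ i, IsOpen (U i)) → (∀ i, (U i).Nonempty) →
    (∀ i, IsOpen (V i)) → (∀ i, (V i).Nonempty) →
    ∃ m : ℕ, 1 ≤ m ∧ ∀ i : Fin n, (nComp f 0 m '' U i ∩ V i).Nonempty

/-- Weak mixing of all orders of an NDS. -/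
def WeaklyMixingAllOrders (f : ℕ → X → X) : Prop :=
  ∀ n : ℕ, 2 ≤ n → WeaklyMixingOfOrder f n

/-- Mild mixing of an NDS: the product with any transitive NDS (on a compact
metric space, with continuous maps) is transitive. -/
def MildlyMixing (f : ℕ → X → X) : Prop :=
  ∀ (Y : Type) [MetricSpace Y] [CompactSpace Y] (g : ℕ → Y → Y),
    (∀ n, Continuous (g n)) → NDSTransitive g →
      NDSTransitive (fun n (p : X × Y) => (f n p.1, g n p.2))

/-- Δ-transitivity of an NDS. -/
def DeltaTransitive (f : ℕ → X → X) : Prop :=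
  ∀ m : ℕ, 1 ≤ m → ∃ Y : Set X, Dense Y ∧ IsGδ Y ∧
    ∀ x ∈ Y, Dense {y : Fin m → X | ∃ n : ℕ, 1 ≤ n ∧ y = fun i => nComp f 0 ((i.1 + 1) * n) x}

/-- Δ-mixing of an NDS. -/
def DeltaMixing (f : ℕ → X → X) : Prop :=
  ∀ m : ℕ, 1 ≤ m → ∀ A : Set ℕ, A.Infinite → 0 ∉ A →
    ∃ Y : Set X, Dense Y ∧ IsGδ Y ∧
      ∀ x ∈ Y, Dense {y : Fin m → X | ∃ n ∈ A, y = fun i => nComp f 0 ((i.1 + 1) * n) x}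

/-- The set `N_{f_{1,∞}}(U,V)` of (positive) hitting times. -/
def hitTimes (f : ℕ → X → X) (U V : Set X) : Set ℕ :=
  {n : ℕ | 1 ≤ n ∧ (nComp f 0 n '' U ∩ V).Nonempty}

/-- A set of positive integers is syndetic if it has bounded gaps. -/
def Syndetic (A : Set ℕ) : Prop :=
  ∃ M : ℕ, ∀ i : ℕ, 1 ≤ i → ∃ j ∈ A, i ≤ j ∧ j ≤ i + M

/-- A set of positive integers is thick if it contains arbitrarily long runs. -/
def ThickSet (A : Set ℕ) : Prop :=
  ∀ p : ℕ, ∃ n : ℕ, 1 ≤ n ∧ ∀ j ≤ p, n + j ∈ A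

/-- A set of positive integers is thickly syndetic. -/
def ThicklySyndetic (A : Set ℕ) : Prop :=
  ∀ l : ℕ, Syndetic {m : ℕ | ∀ j ≤ l, m + j ∈ A}

/-- Thick transitivity of an NDS. -/
def ThicklyTransitive (f : ℕ → X → X) : Prop :=
  ∀ U V : Set X, IsOpen U → U.Nonempty → IsOpen V → V.Nonempty →
    ThickSet (hitTimes f U V)

/-- Thickly syndetic transitivity of an NDS. -/
def ThicklySyndeticallyTransitive (f : ℕ → X → X) : Prop :=
  ∀ U V : Set X, IsOpen U → U.Nonempty → IsOpen V → V.Nonempty →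
    ThicklySyndetic (hitTimes f U V)

/-- Total transitivity of an NDS: every iterate `f^{[n]}` is transitive. -/
def TotallyTransitive (f : ℕ → X → X) : Prop :=
  ∀ n : ℕ, 1 ≤ n → NDSTransitive (iterNDS f n)

/-- An NDS is feeble open if each map sends nonempty open sets to sets with
nonempty interior. -/
def FeebleOpen (f : ℕ → X → X) : Prop :=
  ∀ i : ℕ, ∀ U : Set X, IsOpen U → U.Nonempty → (interior (f i '' U)).Nonempty

/-- Strong multi-transitivity of an autonomous system `(X, g)`. -/
def ADSStronglyMultiTransitive (g : X → X) : Prop :=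
  ∀ m : ℕ, 1 ≤ m → ∀ a : Fin m → ℕ, (∀ j, 1 ≤ a j) →
    ∀ U V : Fin m → Set X,
      (∀ j, IsOpen (U j)) → (∀ j, (U j).Nonempty) →
      (∀ j, IsOpen (V j)) → (∀ j, (V j).Nonempty) →
      ∃ l : ℕ, 1 ≤ l ∧ ∀ j : Fin m, (g^[a j * l] '' U j ∩ V j).Nonempty

/-- Δ-transitivity of an autonomous system `(X, g)`. -/
def ADSDeltaTransitive (g : X → X) : Prop :=
  ∀ m : ℕ, 1 ≤ m → ∃ Y : Set X, Dense Y ∧ IsGδ Y ∧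
    ∀ x ∈ Y, Dense {y : Fin m → X | ∃ n : ℕ, 1 ≤ n ∧ y = fun i => g^[(i.1 + 1) * n] x}

/-- Thickly syndetic transitivity of an autonomous system `(X, g)`. -/
def ADSThicklySyndeticallyTransitive (g : X → X) : Prop :=
  ∀ U V : Set X, IsOpen U → U.Nonempty → IsOpen V → V.Nonempty →
    ThicklySyndetic {n : ℕ | 1 ≤ n ∧ (g^[n] '' U ∩ V).Nonempty}

end Topo

section MetricDefs

variable [MetricSpace X]

/-- The compositions `f_r^k` converge collectively to the iterates `g^k`. -/
def CollectiveConvergence (f : ℕ → X → X) (g : X → X) : Prop :=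
  ∀ ε : ℝ, 0 < ε → ∃ r₀ : ℕ, ∀ r ≥ r₀, ∀ k : ℕ, 1 ≤ k → ∀ x : X,
    dist (nComp f r k x) (g^[k] x) < ε

/-- Chain mixing of an NDS. -/
def NDSChainMixing (f : ℕ → X → X) : Prop :=
  ∀ x y : X, ∀ δ : ℝ, 0 < δ → ∃ N : ℕ, 1 ≤ N ∧ ∀ n ≥ N,
    ∃ c : ℕ → X, c 0 = x ∧ c n = y ∧ ∀ i < n, dist (f i (c i)) (c (i + 1)) < δ

/-- Chain transitivity of an NDS. -/
def NDSChainTransitive (f : ℕ → X → X) : Prop :=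
  ∀ x y : X, ∀ δ : ℝ, 0 < δ → ∃ n : ℕ, 1 ≤ n ∧
    ∃ c : ℕ → X, c 0 = x ∧ c n = y ∧ ∀ i < n, dist (f i (c i)) (c (i + 1)) < δ

/-- The shadowing property of an NDS. -/
def NDSShadowing (f : ℕ → X → X) : Prop :=
  ∀ ε : ℝ, 0 < ε → ∃ δ : ℝ, 0 < δ ∧ ∀ n : ℕ, ∀ c : ℕ → X,
    (∀ i < n, dist (f i (c i)) (c (i + 1)) < δ) →
      ∃ z : X, ∀ i ≤ n, dist (nComp f 0 i z) (c i) < ε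

end MetricDefs

end NDSDefs

section NDSIterates

variable {X : Type*} (f : ℕ → X → X)

theorem nComp_add (i m n : ℕ) :
    nComp f i (m + n) = nComp f (i + m) n ∘ nComp f i m := by
  induction n with
  | zero => rfl
  | succ n ih => rw [← Nat.add_assoc, nComp, nComp, ih, Nat.add_assoc, Function.comp_assoc]

theorem nComp_iterNDS (k i m : ℕ) :
    nComp (iterNDS f k) i m = nComp f (k * i) (k * m) := by
  induction m with
  | zero => rfl
  | succ m ih => rw [nComp, ih, iterNDS, Nat.mul_add, Nat.mul_succ, nComp_add]

end NDSIterates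

theorem ThickSet.exists_mul_mem {A : Set ℕ} (hA : ThickSet A) {k : ℕ} (hk : 1 ≤ k) :
    ∃ m, 1 ≤ m ∧ k * m ∈ A := by
  obtain ⟨n, -, run_subset⟩ := hA k
  have lt_multiple : n < k * (n / k + 1) := Nat.lt_mul_div_succ n hk
  have multiple_le : k * (n / k + 1) ≤ n + k := by
    rw [Nat.mul_succ]
    exact Nat.add_le_add_right (Nat.mul_div_le n k) k
  refine ⟨n / k + 1, Nat.succ_pos _, ?_⟩
  rw [← Nat.add_sub_of_le lt_multiple.le]
  exact run_subset _ (Nat.sub_le_iff_le_add'.mpr multiple_le)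

theorem thicklyTransitive_totallyTransitive_general {X : Type*} [TopologicalSpace X]
    {f : ℕ → X → X} (h : ThicklyTransitive f) : TotallyTransitive f := by
  intro k hk U V hU hU_ne hV hV_ne
  obtain ⟨m, hm, mem_hitTimes⟩ := (h U V hU hU_ne hV hV_ne).exists_mul_mem hk
  refine ⟨m, hm, ?_⟩
  rw [nComp_iterNDS, Nat.mul_zero]
  exact mem_hitTimes.2

/-- a thickly transitive NDS is totally transitive. -/
theorem thicklyTransitive_totallyTransitive {X : Type*} [MetricSpace X] [CompactSpace X]
    (f : ℕ → X → X) (hf : ∀ n, Continuous (f n))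
    (h : ThicklyTransitive f) : TotallyTransitive f :=
  thicklyTransitive_totallyTransitive_general h
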